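/- Let T > 0, k ≥ 0, λ > 0, and let φ : [0,T] → ℝ be continuous, not identically zero, and satisfy the integral equation ∫₀^T min(k+t, k+s) φ(s) ds = λ φ(t) for all t ∈ [0,T]. Then √λ · cos(T/√λ) = k · sin(T/√λ) (equivalently, cot(T/√λ) = k/√λ). -/

import Mathlib

open MeasureTheory intervalIntegral

/-!
For `s, t ≥ 0`, `min t s` is the length of `{r ∈ [0, t] | r ≤ s}`, so by Fubini the covariance
operator sends `φ` to `t ↦ k ∫₀ᵀ φ + ∫₀ᵗ ∫ᵣᵀ φ(s) ds dr`. An integrable eigenfunction is thus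
twice differentiable and solves `λ φ'' = -φ` with `λ φ(0) = k ∫₀ᵀ φ` and `φ'(T) = 0`. The
condition at `T` forces `φ(t) = cos((T - t)/√λ) φ(T)` with `φ(T) ≠ 0`, and the condition at `0`
then becomes the equation for `λ`.
-/

open Set

section HarmonicOscillator

variable {E : Type*} [NormedAddCommGroup E] [NormedSpace ℝ E] {S : Set ℝ} {x t : ℝ}

theorem eq_of_hasDerivWithinAt_zero {f : ℝ → E} (hS : Convex ℝ S)
    (hf : ∀ y ∈ S, HasDerivWithinAt f 0 S y) (hx : x ∈ S) (ht : t ∈ S) : f x = f t := by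
  have hle := hS.norm_image_sub_le_of_norm_hasDerivWithin_le hf (fun _ _ => norm_zero.le) ht hx
  rw [zero_mul] at hle
  exact sub_eq_zero.mp (norm_le_zero_iff.mp hle)

theorem harmonicOscillator_eq {u v : ℝ → E} {ω : ℝ} (hS : Convex ℝ S)
    (hu : ∀ y ∈ S, HasDerivWithinAt u (v y) S y)
    (hv : ∀ y ∈ S, HasDerivWithinAt v (-(ω ^ 2 • u y)) S y) (hx : x ∈ S) (ht : t ∈ S) :
    ω • u t = (ω * Real.cos (ω * (t - x))) • u x + Real.sin (ω * (t - x)) • v x := by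
  -- The value at time `t` predicted from the state at time `y` does not depend on `y`.
  let prediction : ℝ → E := fun y =>
    (ω * Real.cos (ω * (t - y))) • u y + Real.sin (ω * (t - y)) • v y
  have hprediction : ∀ y ∈ S, HasDerivWithinAt prediction 0 S y := by
    intro y hy
    have hphase : HasDerivAt (fun y => ω * (t - y)) (-ω) y := by
      simpa using ((hasDerivAt_id y).const_sub t).const_mul ω
    refine (((hphase.cos.const_mul ω).hasDerivWithinAt.smul (hu y hy)).add
      (hphase.sin.hasDerivWithinAt.smul (hv y hy))).congr_deriv ?_
    module
  simpa [prediction] using (eq_of_hasDerivWithinAt_zero hS hprediction hx ht).symm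

end HarmonicOscillator

section IntervalIntegral

variable {E : Type*} [NormedAddCommGroup E] [NormedSpace ℝ E] {φ : ℝ → E} {a b t : ℝ}

theorem intervalIntegral_indicator_Ici {r : ℝ} (hr : r ∈ Icc a b) :
    ∫ s in a..b, (Ici r).indicator φ s = ∫ s in r..b, φ s := by
  rw [integral_of_le (hr.1.trans hr.2), setIntegral_indicator measurableSet_Ici,
    setIntegral_congr_set (Filter.EventuallyEq.rfl.inter Ioi_ae_eq_Ici.symm), Ioc_inter_Ioi,
    max_eq_right hr.1, integral_of_le hr.2]

variable [CompleteSpace E]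

theorem intervalIntegral_indicator_Iic_const {s : ℝ} (hat : a ≤ t) (has : a ≤ s) (e : E) :
    ∫ r in a..t, (Iic s).indicator (fun _ => e) r = (min t s - a) • e := by
  rw [integral_of_le hat, setIntegral_indicator measurableSet_Iic, Ioc_inter_Iic,
    setIntegral_const, Real.volume_real_Ioc_of_le (le_min hat has)]

theorem integral_min_sub_smul (hφ : IntervalIntegrable φ volume a b) (ht : t ∈ Icc a b) :
    ∫ s in a..b, (min t s - a) • φ s = ∫ r in a..t, ∫ s in r..b, φ s := by
  have hab : a ≤ b := ht.1.trans ht.2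
  let F : ℝ → ℝ → E := fun s r => {p : ℝ × ℝ | p.2 ≤ p.1}.indicator (fun p => φ p.1) (s, r)
  have hF : IntegrableOn F.uncurry (uIoc a b ×ˢ uIoc a t) := by
    have hφ_fst : IntegrableOn (fun p : ℝ × ℝ => φ p.1) (uIoc a b ×ˢ uIoc a t) := by
      rw [uIoc_of_le ht.1, IntegrableOn, Measure.volume_eq_prod, ← Measure.prod_restrict]
      exact hφ.def'.comp_fst _
    exact hφ_fst.indicator (measurableSet_le measurable_snd measurable_fst)
  calc ∫ s in a..b, (min t s - a) • φ s
      = ∫ s in a..b, ∫ r in a..t, F s r := integral_congr fun s hs =>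
        (intervalIntegral_indicator_Iic_const ht.1 (uIcc_of_le hab ▸ hs).1 (φ s)).symm
    _ = ∫ r in a..t, ∫ s in a..b, F s r := intervalIntegral_intervalIntegral_swap hF
    _ = ∫ r in a..t, ∫ s in r..b, φ s := integral_congr fun r hr =>
        have hr : r ∈ Icc a t := uIcc_of_le ht.1 ▸ hr
        intervalIntegral_indicator_Ici ⟨hr.1, hr.2.trans ht.2⟩

theorem hasDerivWithinAt_Icc_integral_right (hφ : ContinuousOn φ (Icc a b)) (ht : t ∈ Icc a b) :
    HasDerivWithinAt (fun t => ∫ s in a..t, φ s) (φ t) (Icc a b) t := by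
  have : Fact (t ∈ Icc a b) := ⟨ht⟩
  exact integral_hasDerivWithinAt_right
    ((hφ.mono (Icc_subset_Icc_right ht.2)).intervalIntegrable_of_Icc ht.1)
    (hφ.stronglyMeasurableAtFilter_nhdsWithin measurableSet_Icc t) (hφ t ht)

theorem hasDerivWithinAt_Icc_integral_left (hφ : ContinuousOn φ (Icc a b)) (ht : t ∈ Icc a b) :
    HasDerivWithinAt (fun t => ∫ s in t..b, φ s) (-φ t) (Icc a b) t := by
  have : Fact (t ∈ Icc a b) := ⟨ht⟩
  exact integral_hasDerivWithinAt_left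
    ((hφ.mono (Icc_subset_Icc_left ht.1)).intervalIntegrable_of_Icc ht.2)
    (hφ.stronglyMeasurableAtFilter_nhdsWithin measurableSet_Icc t) (hφ t ht)

theorem integral_cos_sub_div_smul {r : ℝ} (hr : r ≠ 0) (e : E) :
    ∫ s in a..b, Real.cos ((b - s) / r) • e = (r * Real.sin ((b - a) / r)) • e := by
  rw [intervalIntegral.integral_smul_const]
  simp [sub_div, intervalIntegral.integral_comp_sub_div, hr]

end IntervalIntegral

section CovarianceOperator

variable {E : Type*} [NormedAddCommGroup E] [NormedSpace ℝ E]

/-- The covariance operator of the GSP-Wiener process on `[0, T]`: the integral operator with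
kernel `min (k + t) (k + s)`, acting on functions with values in a real normed space. -/
noncomputable def gspWienerOperator (k T : ℝ) (φ : ℝ → E) (t : ℝ) : E :=
  ∫ s in (0 : ℝ)..T, min (k + t) (k + s) • φ s

variable [CompleteSpace E] {k T lam t : ℝ} {φ : ℝ → E}

theorem gspWienerOperator_eq_add_integral_integral (hφ : IntervalIntegrable φ volume 0 T)
    (ht : t ∈ Icc 0 T) :
    gspWienerOperator k T φ t =
      k • (∫ s in (0 : ℝ)..T, φ s) + ∫ r in (0 : ℝ)..t, ∫ s in r..T, φ s := by
  have hmin : IntervalIntegrable (fun s => (min t s - 0) • φ s) volume 0 T :=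
    hφ.continuousOn_smul (by fun_prop)
  calc gspWienerOperator k T φ t
      = ∫ s in (0 : ℝ)..T, (k • φ s + (min t s - 0) • φ s) := by
        simp only [gspWienerOperator, min_add_add_left, add_smul, sub_zero]
    _ = k • (∫ s in (0 : ℝ)..T, φ s) + ∫ r in (0 : ℝ)..t, ∫ s in r..T, φ s := by
        rw [integral_add (hφ.continuousOn_smul continuousOn_const) hmin,
          intervalIntegral.integral_smul, integral_min_sub_smul hφ ht]

theorem hasDerivWithinAt_gspWienerOperator (hφ : IntervalIntegrable φ volume 0 T)
    (ht : t ∈ Icc 0 T) :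
    HasDerivWithinAt (gspWienerOperator k T φ) (∫ s in t..T, φ s) (Icc 0 T) t := by
  have hT : 0 ≤ T := ht.1.trans ht.2
  have htail : ContinuousOn (fun r => ∫ s in r..T, φ s) (Icc 0 T) := by
    rw [← uIcc_of_le hT]
    refine continuousOn_primitive_interval_left ?_
    rwa [uIcc_of_le hT, ← intervalIntegrable_iff_integrableOn_Icc_of_le hT]
  exact ((hasDerivWithinAt_Icc_integral_right htail ht).const_add _).congr_of_mem
    (fun _ => gspWienerOperator_eq_add_integral_integral hφ) ht

theorem hasDerivWithinAt_of_gspWienerOperator_eq_smul (hlam : lam ≠ 0)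
    (hφ : IntervalIntegrable φ volume 0 T)
    (heq : ∀ t ∈ Icc 0 T, gspWienerOperator k T φ t = lam • φ t) (ht : t ∈ Icc 0 T) :
    HasDerivWithinAt φ (lam⁻¹ • ∫ s in t..T, φ s) (Icc 0 T) t :=
  ((hasDerivWithinAt_gspWienerOperator hφ ht).const_smul lam⁻¹).congr_of_mem
    (fun s hs => (inv_smul_eq_iff₀ hlam).mpr (heq s hs) |>.symm) ht

theorem eq_cos_smul_of_gspWienerOperator_eq_smul (hlam : 0 < lam)
    (hφ : IntervalIntegrable φ volume 0 T)
    (heq : ∀ t ∈ Icc 0 T, gspWienerOperator k T φ t = lam • φ t) (ht : t ∈ Icc 0 T) :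
    φ t = Real.cos ((T - t) / √lam) • φ T := by
  have hderiv : ∀ y ∈ Icc 0 T, HasDerivWithinAt φ (lam⁻¹ • ∫ s in y..T, φ s) (Icc 0 T) y :=
    fun y => hasDerivWithinAt_of_gspWienerOperator_eq_smul hlam.ne' hφ heq
  have hcont : ContinuousOn φ (Icc 0 T) := fun y hy => (hderiv y hy).continuousWithinAt
  have hderiv₂ : ∀ y ∈ Icc 0 T, HasDerivWithinAt (fun y => lam⁻¹ • ∫ s in y..T, φ s)
      (-((√lam)⁻¹ ^ 2 • φ y)) (Icc 0 T) y := fun y hy => by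
    rw [inv_pow, Real.sq_sqrt hlam.le, ← smul_neg]
    exact (hasDerivWithinAt_Icc_integral_left hcont hy).const_smul lam⁻¹
  have hω : (√lam)⁻¹ ≠ 0 := inv_ne_zero (Real.sqrt_pos.mpr hlam).ne'
  have hphase : Real.cos ((√lam)⁻¹ * (t - T)) = Real.cos ((T - t) / √lam) := by
    rw [← Real.cos_neg]
    ring_nf
  have hsol := harmonicOscillator_eq (convex_Icc 0 T) hderiv hderiv₂
    (right_mem_Icc.mpr (ht.1.trans ht.2)) ht
  rw [integral_same, smul_zero, smul_zero, add_zero, mul_smul, hphase] at hsol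
  exact smul_right_injective E hω hsol

end CovarianceOperator

theorem gsp_wiener_eigenvalue_equation_general
    {E : Type*} [NormedAddCommGroup E] [NormedSpace ℝ E] [CompleteSpace E]
    {T k lam : ℝ} {φ : ℝ → E} (hlam : 0 < lam)
    (hφ : IntervalIntegrable φ volume 0 T) (hφne : ∃ t ∈ Icc 0 T, φ t ≠ 0)
    (heq : ∀ t ∈ Icc 0 T, ∫ s in (0 : ℝ)..T, min (k + t) (k + s) • φ s = lam • φ t) :
    √lam * Real.cos (T / √lam) = k * Real.sin (T / √lam) := by
  obtain ⟨t₀, ht₀, hφt₀⟩ := hφne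
  have hT : 0 ≤ T := ht₀.1.trans ht₀.2
  have hr : √lam ≠ 0 := (Real.sqrt_pos.mpr hlam).ne'
  have hcos : ∀ t ∈ Icc 0 T, φ t = Real.cos ((T - t) / √lam) • φ T :=
    fun t => eq_cos_smul_of_gspWienerOperator_eq_smul hlam hφ heq
  have hφT : φ T ≠ 0 := fun h => hφt₀ (by rw [hcos t₀ ht₀, h, smul_zero])
  have hintegral : ∫ s in (0 : ℝ)..T, φ s = (√lam * Real.sin (T / √lam)) • φ T := by
    rw [integral_congr fun s hs => hcos s (uIcc_of_le hT ▸ hs), integral_cos_sub_div_smul hr,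
      sub_zero]
  have hboundary : lam • φ 0 = k • ∫ s in (0 : ℝ)..T, φ s := by
    have h₀ : (0 : ℝ) ∈ Icc 0 T := left_mem_Icc.mpr hT
    simpa using (heq 0 h₀).symm.trans (gspWienerOperator_eq_add_integral_integral hφ h₀)
  rw [hintegral, hcos 0 (left_mem_Icc.mpr hT), sub_zero, smul_smul, smul_smul] at hboundary
  have hscalar := smul_left_injective ℝ hφT hboundary
  refine mul_left_cancel₀ hr ?_
  linear_combination hscalar + Real.cos (T / √lam) * Real.mul_self_sqrt hlam.le

/-- If `λ > 0` admits a nonzero continuous eigenfunction for the kernel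
`min (k+t) (k+s)` on `[0,T]`, then `√λ·cos(T/√λ) = k·sin(T/√λ)`. -/
theorem gsp_wiener_eigenvalue_equation
    (T k lam : ℝ) (hT : 0 < T) (hk : 0 ≤ k) (hlam : 0 < lam)
    (φ : ℝ → ℝ) (hφcont : ContinuousOn φ (Set.Icc 0 T))
    (hφne : ∃ t ∈ Set.Icc (0 : ℝ) T, φ t ≠ 0)
    (heq : ∀ t ∈ Set.Icc (0 : ℝ) T,
      ∫ s in (0 : ℝ)..T, min (k + t) (k + s) * φ s = lam * φ t) :
    Real.sqrt lam * Real.cos (T / Real.sqrt lam) =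
      k * Real.sin (T / Real.sqrt lam) :=
  gsp_wiener_eigenvalue_equation_general hlam (hφcont.intervalIntegrable_of_Icc hT.le) hφne heq
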